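/- The topological group M_F is ℵ₀-bounded — that is, for every open neighborhood U of the zero function 0̲ in M_F there exists a countable set S ⊆ M with S + U = M — if and only if every A ∈ 𝒜_> can be written as a union of finitely many μ-atoms. -/

import Mathlib

open MeasureTheory Topology Set Pointwise

/-- The set of all real-valued measurable functions on `X`, as a subtype. -/
abbrev Mble (X : Type*) [MeasurableSpace X] : Type _ := {f : X → ℝ // Measurable f}

/-- The basic set `B(f, A, ε)`: all `g` such that for some measurable null set `N`,
`sup_{x ∈ A \ N} |f x - g x| < ε`. -/
def FBall {X : Type*} [MeasurableSpace X] (μ : Measure X) (f : Mble X) (A : Set X)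
    (ε : ℝ) : Set (Mble X) :=
  {g | ∃ N : Set X, MeasurableSet N ∧ μ N = 0 ∧
        ∃ b : ℝ, b < ε ∧ ∀ x ∈ A \ N, |f.1 x - g.1 x| ≤ b}

/-- The `F_μ`-topology on `Mble X`, generated by the sets `B(f, A, ε)` with
`A` measurable of finite measure and `ε > 0`. -/
def FTop {X : Type*} [MeasurableSpace X] (μ : Measure X) : TopologicalSpace (Mble X) :=
  TopologicalSpace.generateFrom
    {S | ∃ (f : Mble X) (A : Set X) (ε : ℝ),
        MeasurableSet A ∧ μ A < ⊤ ∧ 0 < ε ∧ S = FBall μ f A ε}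

/-- A `μ`-atom: a measurable set of positive measure admitting no decomposition into two
disjoint measurable pieces of positive measure. -/
def MuAtom {X : Type*} [MeasurableSpace X] (μ : Measure X) (A : Set X) : Prop :=
  MeasurableSet A ∧ 0 < μ A ∧
    ¬ ∃ B C : Set X, MeasurableSet B ∧ MeasurableSet C ∧ Disjoint B C ∧
        B ∪ C = A ∧ 0 < μ B ∧ 0 < μ C

/-- `G` is a union of finitely many `μ`-atoms. -/
def FinAtomUnion {X : Type*} [MeasurableSpace X] (μ : Measure X) (G : Set X) : Prop :=
  ∃ (n : ℕ) (F : Fin n → Set X), (∀ i, MuAtom μ (F i)) ∧ G = ⋃ i, F i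

/-- `L^∞_G`: the measurable functions that are essentially bounded on `G`. -/
def Linf {X : Type*} [MeasurableSpace X] (μ : Measure X) (G : Set X) : Set (Mble X) :=
  {f | ∃ M₀ : ℝ, 0 < M₀ ∧ ∃ N : Set X, MeasurableSet N ∧ μ N = 0 ∧
        ∀ x ∈ G \ N, |f.1 x| ≤ M₀}

/-- The intersection `⋂_{G ∈ 𝒜_>} L^∞_G`. -/
def InterLinf {X : Type*} [MeasurableSpace X] (μ : Measure X) : Set (Mble X) :=
  ⋂ G ∈ {A : Set X | MeasurableSet A ∧ 0 < μ A ∧ μ A < ⊤}, Linf μ G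

/-- The zero function as an element of `Mble X`. -/
def zeroM {X : Type*} [MeasurableSpace X] : Mble X := ⟨fun _ => 0, measurable_const⟩

/-- `μ` is hemifinite: some sequence in `𝒜_>` almost contains every member of `𝒜_>`. -/
def Hemifinite {X : Type*} [MeasurableSpace X] (μ : Measure X) : Prop :=
  ∃ A : ℕ → Set X, (∀ n, MeasurableSet (A n) ∧ 0 < μ (A n) ∧ μ (A n) < ⊤) ∧
    ∀ F : Set X, MeasurableSet F → 0 < μ F → μ F < ⊤ → ∃ n, μ (F \ A n) = 0

/-- `G⁺`: functions strictly positive μ-almost everywhere on `G`. -/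
def Gplus {X : Type*} [MeasurableSpace X] (μ : Measure X) (G : Set X) : Set (Mble X) :=
  {f | ∃ N : Set X, MeasurableSet N ∧ μ N = 0 ∧ ∀ x ∈ G \ N, 0 < f.1 x}

/-- `G⁰`: functions nonnegative μ-almost everywhere on `G`. -/
def Gzero {X : Type*} [MeasurableSpace X] (μ : Measure X) (G : Set X) : Set (Mble X) :=
  {f | ∃ N : Set X, MeasurableSet N ∧ μ N = 0 ∧ ∀ x ∈ G \ N, 0 ≤ f.1 x}

instance {X : Type*} [MeasurableSpace X] : Add (Mble X) :=
  ⟨fun f g => ⟨f.1 + g.1, f.2.add g.2⟩⟩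

/-!
A measurable real function is almost everywhere constant on an atom, so on a union of `n` atoms `M`
looks like a subset of `ℝⁿ` with the sup distance, which is separable. Conversely, a set `A` of
positive measure that is not a finite union of atoms contains a sequence of disjoint measurable sets
`C n` of positive measure: otherwise splitting non-atoms stops after finitely many steps. Given a
sequence `s n` in `M`, a measurable function equal to `s n + ε` on each `C n` is at essential
distance at least `ε` on `A` from every `s n`, so countably many balls of radius `ε` cannot cover
`M`.
-/

open Filter Function TopologicalSpace

theorem exists_countable_forall_dist_lt {α β : Type*} [PseudoMetricSpace β]
    [SecondCountableTopology β] (φ : α → β) :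
    ∃ S : Set α, S.Countable ∧ ∀ ε > 0, ∀ a, ∃ s ∈ S, dist (φ a) (φ s) < ε := by
  let : PseudoMetricSpace α := .induced φ inferInstance
  have : SecondCountableTopology α := (IsInducing.induced φ).secondCountableTopology
  obtain ⟨S, hS_count, hS_dense⟩ := exists_countable_dense α
  exact ⟨S, hS_count, fun ε hε a => hS_dense.exists_dist_lt a hε⟩

section

variable {X : Type*} [MeasurableSpace X] {μ : Measure X}

section FiniteAtomUnions

variable {A B F : Set X}

theorem MuAtom.measure_inter_eq_zero_or_measure_sdiff_eq_zero (hF : MuAtom μ F)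
    (hB : MeasurableSet B) : μ (F ∩ B) = 0 ∨ μ (F \ B) = 0 := by
  obtain ⟨hF_meas, -, hF_indecomp⟩ := hF
  by_contra! h
  exact hF_indecomp ⟨F ∩ B, F \ B, hF_meas.inter hB, hF_meas.diff hB,
    disjoint_sdiff_inter.symm, inter_union_sdiff F B,
    pos_iff_ne_zero.2 h.1, pos_iff_ne_zero.2 h.2⟩

theorem MuAtom.exists_ae_eq_const {Y : Type*} [MeasurableSpace Y]
    [MeasurableSpace.CountablySeparated Y] [Nonempty Y] (hF : MuAtom μ F) {φ : X → Y}
    (hφ : Measurable φ) : ∃ c, ∀ᵐ x ∂μ, x ∈ F → φ x = c := by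
  have zero_or_one (V : Set Y) (hV : MeasurableSet V) :
      (∀ᵐ x ∂μ.restrict F, φ x ∈ V) ∨ ∀ᵐ x ∂μ.restrict F, φ x ∉ V := by
    simp_rw [ae_restrict_iff' hF.1, ← mem_preimage (f := φ)]
    refine (hF.measure_inter_eq_zero_or_measure_sdiff_eq_zero (hφ hV)).symm.imp ?_ ?_ <;>
      intro h <;> simpa [ae_iff, inter_def, sdiff_eq] using h
  obtain ⟨c, hc⟩ := exists_eventuallyEq_const_of_forall_separating MeasurableSet zero_or_one
  exact ⟨c, (ae_restrict_iff' hF.1).1 hc⟩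

theorem finAtomUnion_empty : FinAtomUnion μ (∅ : Set X) :=
  ⟨0, Fin.elim0, fun i => i.elim0, (iUnion_of_empty _).symm⟩

theorem MuAtom.finAtomUnion (hA : MuAtom μ A) : FinAtomUnion μ A :=
  ⟨1, fun _ => A, fun _ => hA, (iUnion_const A).symm⟩

theorem FinAtomUnion.union (hA : FinAtomUnion μ A) (hB : FinAtomUnion μ B) :
    FinAtomUnion μ (A ∪ B) := by
  obtain ⟨m, F, hF, rfl⟩ := hA
  obtain ⟨n, G, hG, rfl⟩ := hB
  refine ⟨m + n, Sum.elim F G ∘ finSumFinEquiv.symm, fun i => ?_, ?_⟩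
  · rw [comp_apply]
    rcases finSumFinEquiv.symm i with j | j
    exacts [hF j, hG j]
  · exact (iUnion_sumElim F G).symm.trans
      (finSumFinEquiv.symm.surjective.iUnion_comp (Sum.elim F G)).symm

/-- The relation "`B` is a measurable subset of `A` that misses a part of `A` of positive measure".
Accessibility of `A` under it expresses that measurable pieces of positive measure can be split off
from `A` only finitely often. -/
def EssSSubset (μ : Measure X) (B A : Set X) : Prop :=
  MeasurableSet B ∧ B ⊆ A ∧ 0 < μ (A \ B)

theorem finAtomUnion_of_acc_essSSubset (hacc : Acc (EssSSubset μ) A) (hA : MeasurableSet A)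
    (hA_pos : 0 < μ A) : FinAtomUnion μ A := by
  induction hacc with
  | intro A _ ih =>
    by_cases hatom : MuAtom μ A
    · exact hatom.finAtomUnion
    obtain ⟨B, C, hB, hC, hBC, rfl, hB_pos, hC_pos⟩ :=
      not_not.1 fun hindecomp => hatom ⟨hA, hA_pos, hindecomp⟩
    have hB_lt : EssSSubset μ B (B ∪ C) :=
      ⟨hB, subset_union_left, by rwa [union_sdiff_left, hBC.sdiff_eq_right]⟩
    have hC_lt : EssSSubset μ C (B ∪ C) :=
      ⟨hC, subset_union_right, by rwa [union_sdiff_right, hBC.sdiff_eq_left]⟩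
    exact (ih B hB_lt hB hB_pos).union (ih C hC_lt hC hC_pos)

theorem exists_disjoint_seq_of_not_acc_essSSubset (hacc : ¬ Acc (EssSSubset μ) A)
    (hA : MeasurableSet A) :
    ∃ C : ℕ → Set X, (∀ n, MeasurableSet (C n)) ∧ Pairwise (Disjoint on C) ∧
      (∀ n, 0 < μ (C n)) ∧ ∀ n, C n ⊆ A := by
  obtain ⟨D, rfl, hD⟩ := not_acc_iff_exists_descending_chain.1 hacc
  have hD_meas : ∀ n, MeasurableSet (D n)
    | 0 => hA
    | n + 1 => (hD n).1
  have hD_anti : Antitone D := antitone_nat_of_succ_le fun n => (hD n).2.1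
  refine ⟨fun n => D n \ D (n + 1), fun n => (hD_meas n).diff (hD_meas (n + 1)), ?_,
    fun n => (hD n).2.2, fun n => sdiff_subset.trans (hD_anti n.zero_le)⟩
  exact (pairwise_disjoint_on _).2 fun m n hmn =>
    disjoint_sdiff_left.mono_right (sdiff_subset.trans (hD_anti hmn))

end FiniteAtomUnions

section FTopology

variable {f g : Mble X} {A B : Set X} {ε δ : ℝ}

theorem mem_fBall_iff :
    g ∈ FBall μ f A ε ↔ ∃ b < ε, ∀ᵐ x ∂μ, x ∈ A → |f.1 x - g.1 x| ≤ b := by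
  constructor
  · rintro ⟨N, -, hN_null, b, hb, hN⟩
    refine ⟨b, hb, ?_⟩
    filter_upwards [measure_eq_zero_iff_ae_notMem.1 hN_null] with x hxN hxA using hN x ⟨hxA, hxN⟩
  · rintro ⟨b, hb, hae⟩
    obtain ⟨N, hbad, hN, hN_null⟩ := exists_measurable_superset_of_null (ae_iff.1 hae)
    exact ⟨N, hN, hN_null, b, hb, fun x ⟨hxA, hxN⟩ =>
      not_not.1 fun hx => hxN (hbad fun h => hx (h hxA))⟩

theorem mem_fBall_self (hε : 0 < ε) : f ∈ FBall μ f A ε :=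
  mem_fBall_iff.2 ⟨0, hε, .of_forall fun x _ => by simp⟩

theorem fBall_subset_fBall (hAB : A ≤ᵐ[μ] B) (hεδ : ε ≤ δ) :
    FBall μ f B ε ⊆ FBall μ f A δ := by
  intro g hg
  obtain ⟨b, hb, hae⟩ := mem_fBall_iff.1 hg
  refine mem_fBall_iff.2 ⟨b, hb.trans_le hεδ, ?_⟩
  filter_upwards [hAB, hae] with x hxAB hx hxA using hx (hxAB hxA)

theorem exists_fBall_subset_fBall_of_mem (hg : g ∈ FBall μ f A ε) :
    ∃ δ > 0, FBall μ g A δ ⊆ FBall μ f A ε := by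
  obtain ⟨b, hb, hfg⟩ := mem_fBall_iff.1 hg
  refine ⟨ε - b, sub_pos.2 hb, fun h hh => ?_⟩
  obtain ⟨c, hc, hgh⟩ := mem_fBall_iff.1 hh
  refine mem_fBall_iff.2 ⟨b + c, by linarith, ?_⟩
  filter_upwards [hfg, hgh] with x hx_fg hx_gh hxA
  exact (abs_sub_le _ _ _).trans (add_le_add (hx_fg hxA) (hx_gh hxA))

/-- The family of all sets `B(f, A, ε)` with `A` of finite measure and `ε > 0`, the defining base
of the `F_μ`-topology. -/
def FBase (μ : Measure X) : Set (Set (Mble X)) :=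
  {S | ∃ (f : Mble X) (A : Set X) (ε : ℝ),
    MeasurableSet A ∧ μ A < ⊤ ∧ 0 < ε ∧ S = FBall μ f A ε}

theorem isTopologicalBasis_fBase : @IsTopologicalBasis _ (FTop μ) (FBase μ) :=
  letI := FTop μ
  { exists_subset_inter := by
      rintro _ ⟨f, A, ε, hA, hA_fin, -, rfl⟩ _ ⟨g, B, δ, hB, hB_fin, -, rfl⟩ h ⟨hf, hg⟩
      obtain ⟨ε', hε', hsub_f⟩ := exists_fBall_subset_fBall_of_mem hf
      obtain ⟨δ', hδ', hsub_g⟩ := exists_fBall_subset_fBall_of_mem hg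
      refine ⟨FBall μ h (A ∪ B) (min ε' δ'),
        ⟨h, A ∪ B, _, hA.union hB, measure_union_lt_top hA_fin hB_fin, lt_min hε' hδ', rfl⟩,
        mem_fBall_self (lt_min hε' hδ'), subset_inter ?_ ?_⟩
      · exact (fBall_subset_fBall subset_union_left.eventuallyLE (min_le_left _ _)).trans hsub_f
      · exact (fBall_subset_fBall subset_union_right.eventuallyLE (min_le_right _ _)).trans hsub_g
    sUnion_eq := sUnion_eq_univ_iff.2 fun f =>
      ⟨FBall μ f ∅ 1, ⟨f, ∅, 1, .empty, by simp, one_pos, rfl⟩, mem_fBall_self one_pos⟩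
    eq_generateFrom := rfl }

theorem isOpen_fBall (hA : MeasurableSet A) (hA_fin : μ A < ⊤) (hε : 0 < ε) :
    IsOpen[FTop μ] (FBall μ f A ε) :=
  letI := FTop μ
  isTopologicalBasis_fBase.isOpen ⟨f, A, ε, hA, hA_fin, hε, rfl⟩

theorem exists_fBall_subset_of_isOpen {U : Set (Mble X)} (hU : IsOpen[FTop μ] U) (hf : f ∈ U) :
    ∃ A ε, MeasurableSet A ∧ μ A < ⊤ ∧ 0 < ε ∧ FBall μ f A ε ⊆ U := by
  let := FTop μ
  obtain ⟨_, ⟨g, A, ε, hA, hA_fin, -, rfl⟩, hfg, hsub⟩ :=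
    isTopologicalBasis_fBase.exists_subset_of_mem_open hf hU
  obtain ⟨δ, hδ, hball⟩ := exists_fBall_subset_fBall_of_mem hfg
  exact ⟨A, δ, hA, hA_fin, hδ, hball.trans hsub⟩

theorem mem_add_fBall_zeroM_iff {S : Set (Mble X)} :
    f ∈ S + FBall μ zeroM A ε ↔ ∃ s ∈ S, f ∈ FBall μ s A ε := by
  have mem_translate (s u : Mble X) : u ∈ FBall μ zeroM A ε ↔ s + u ∈ FBall μ s A ε := by
    have hdiff (x : X) : s.1 x - (s + u).1 x = zeroM.1 x - u.1 x :=
      (sub_add_cancel_left (s.1 x) (u.1 x)).trans (zero_sub (u.1 x)).symm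
    simp only [mem_fBall_iff, hdiff]
  constructor
  · rintro ⟨s, hs, u, hu, rfl⟩
    exact ⟨s, hs, (mem_translate s u).1 hu⟩
  · rintro ⟨s, hs, hf⟩
    have hsum : s + ⟨f.1 - s.1, f.2.sub s.2⟩ = f := Subtype.ext (add_sub_cancel s.1 f.1)
    exact ⟨s, hs, _, (mem_translate s _).2 (hsum.symm ▸ hf), hsum⟩

end FTopology

section CountableCovers

variable {A : Set X} {ε : ℝ}

theorem FinAtomUnion.exists_countable_fBall_cover (hA : FinAtomUnion μ A) (hε : 0 < ε) :
    ∃ S : Set (Mble X), S.Countable ∧ ∀ f, ∃ s ∈ S, f ∈ FBall μ s A ε := by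
  obtain ⟨n, F, hF, rfl⟩ := hA
  choose c hc using fun (f : Mble X) i => (hF i).exists_ae_eq_const f.2
  obtain ⟨S, hS_count, hS⟩ := exists_countable_forall_dist_lt c
  refine ⟨S, hS_count, fun f => ?_⟩
  obtain ⟨s, hsS, hs⟩ := hS ε hε f
  refine ⟨s, hsS, mem_fBall_iff.2 ⟨dist (c f) (c s), hs, ?_⟩⟩
  filter_upwards [ae_all_iff.2 (hc f), ae_all_iff.2 (hc s)] with x hxf hxs hx
  obtain ⟨i, hi⟩ := mem_iUnion.1 hx
  rw [hxf i hi, hxs i hi, ← Real.dist_eq, dist_comm]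
  exact dist_le_pi_dist (c f) (c s) i

theorem exists_forall_notMem_fBall {ι : Type*} [Countable ι] [Nonempty ι] {C : ι → Set X}
    (hC : ∀ i, MeasurableSet (C i)) (hC_disj : Pairwise (Disjoint on C))
    (hC_pos : ∀ i, 0 < μ (C i)) (hCA : ∀ i, C i ⊆ A) (s : ι → Mble X) :
    ∃ f, ∀ i, f ∉ FBall μ (s i) A ε := by
  obtain ⟨f, hf_meas, hf⟩ := exists_measurable_piecewise C hC (fun i x => (s i).1 x + ε)
    (fun i => (s i).2.add_const ε)
    fun i j hij x hx => ((hC_disj hij).notMem_of_mem_left hx.1 hx.2).elim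
  refine ⟨⟨f, hf_meas⟩, fun i hi => ?_⟩
  obtain ⟨b, hb, hae⟩ := mem_fBall_iff.1 hi
  obtain ⟨x, hxC, hx⟩ : ∃ x ∈ C i, |(s i).1 x - f x| ≤ b :=
    ((frequently_ae_mem_iff.2 (hC_pos i).ne').and_eventually hae).exists.imp
      fun x ⟨hxC, hx⟩ => ⟨hxC, hx (hCA i hxC)⟩
  rw [hf i hxC, sub_add_cancel_left, abs_neg] at hx
  exact absurd (hx.trans_lt hb) (le_abs_self ε).not_gt

theorem finAtomUnion_of_countable_fBall_cover (hA : MeasurableSet A) (hA_pos : 0 < μ A)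
    {S : Set (Mble X)} (hS : S.Countable) (hcover : ∀ f, ∃ s ∈ S, f ∈ FBall μ s A ε) :
    FinAtomUnion μ A := by
  by_contra hA_atom
  obtain ⟨C, hC, hC_disj, hC_pos, hCA⟩ := exists_disjoint_seq_of_not_acc_essSSubset
    (fun hacc => hA_atom (finAtomUnion_of_acc_essSSubset hacc hA hA_pos)) hA
  have : Nonempty (Mble X) := ⟨zeroM⟩
  obtain ⟨s, hs⟩ := countable_iff_exists_subset_range.1 hS
  obtain ⟨f, hf⟩ := exists_forall_notMem_fBall hC hC_disj hC_pos hCA s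
  obtain ⟨_, hgS, hfg⟩ := hcover f
  obtain ⟨n, rfl⟩ := hs hgS
  exact hf n hfg

end CountableCovers

theorem stmt10_general (μ : Measure X) :
    (∀ U : Set (Mble X), IsOpen[FTop μ] U → zeroM ∈ U →
        ∃ S : Set (Mble X), S.Countable ∧ S + U = Set.univ) ↔
      ∀ A : Set X, MeasurableSet A → 0 < μ A → μ A < ⊤ → FinAtomUnion μ A := by
  constructor
  · intro hbdd A hA hA_pos hA_fin
    obtain ⟨S, hS, hSU⟩ := hbdd (FBall μ zeroM A 1) (isOpen_fBall hA hA_fin one_pos)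
      (mem_fBall_self one_pos)
    exact finAtomUnion_of_countable_fBall_cover hA hA_pos hS fun f =>
      mem_add_fBall_zeroM_iff.1 (hSU ▸ mem_univ f)
  · intro hatom U hU hU_zero
    obtain ⟨A, ε, hA, hA_fin, hε, hsub⟩ := exists_fBall_subset_of_isOpen hU hU_zero
    obtain ⟨G, hG, hAG⟩ : ∃ G, FinAtomUnion μ G ∧ A ≤ᵐ[μ] G := by
      rcases eq_zero_or_pos (μ A) with hA_null | hA_pos
      · exact ⟨∅, finAtomUnion_empty, (ae_eq_empty.2 hA_null).le⟩
      · exact ⟨A, hatom A hA hA_pos hA_fin, EventuallyLE.rfl⟩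
    obtain ⟨S, hS, hcover⟩ := hG.exists_countable_fBall_cover hε
    refine ⟨S, hS, eq_univ_of_forall fun f => add_subset_add_left hsub ?_⟩
    obtain ⟨s, hsS, hf⟩ := hcover f
    exact mem_add_fBall_zeroM_iff.2 ⟨s, hsS, fBall_subset_fBall hAG le_rfl hf⟩

end

/-- `M_F` is `ℵ₀`-bounded iff every `A ∈ 𝒜_>` is a finite union of
`μ`-atoms. -/
theorem stmt10 {X : Type*} [MeasurableSpace X] (μ : Measure X)
    (hpos : 0 < μ Set.univ)
    (hsub : ∀ A : Set X, MeasurableSet A → μ A = ⊤ →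
      ∃ B, B ⊆ A ∧ MeasurableSet B ∧ 0 < μ B ∧ μ B < ⊤) :
    (∀ U : Set (Mble X), IsOpen[FTop μ] U → zeroM ∈ U →
        ∃ S : Set (Mble X), S.Countable ∧ S + U = Set.univ) ↔
      ∀ A : Set X, MeasurableSet A → 0 < μ A → μ A < ⊤ → FinAtomUnion μ A :=
  stmt10_general μ
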